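/- Let θ ∈ (0, 1), let 0 < μ ≤ 1/√n, let X₀ ∈ ℝ^{n×p} have i.i.d. BG(θ) entries, and fix any w ∈ Γ with ‖w‖ ≤ 1/4. Then for every t > 0, P[ ‖∇²g(w; X₀) − E[∇²g(w; X₀)]‖_op ≥ t ] ≤ 4n exp( −p μ² t² / (512 n² + 32 μ n t) ). -/

import Mathlib

open MeasureTheory ProbabilityTheory Real Matrix
open scoped RealInnerProductSpace ENNReal NNReal

noncomputable section

/-- The Bernoulli–Gaussian law `BG(θ)`: with probability `θ` a standard Gaussian,
with probability `1-θ` a point mass at `0`. -/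
def bg (θ : ℝ) : Measure ℝ :=
  θ.toNNReal • gaussianReal 0 1 + (1 - θ).toNNReal • Measure.dirac 0

instance bg.instIsFiniteMeasure (θ : ℝ) : IsFiniteMeasure (bg θ) := by
  unfold bg; infer_instance

/-- Law of an `n × p` matrix with i.i.d. `BG(θ)` entries. -/
def bgMatrix (θ : ℝ) (n p : ℕ) : Measure (Fin n → Fin p → ℝ) :=
  Measure.pi fun _ => Measure.pi fun _ => bg θ

/-- Law of a vector in `ℝ^n` with i.i.d. `BG(θ)` entries. -/
def bgVec (θ : ℝ) (n : ℕ) : Measure (Fin n → ℝ) :=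
  Measure.pi fun _ => bg θ

/-- The smooth sparsity surrogate `h_μ(z) = μ log cosh (z/μ)`. -/
def hmu (μ z : ℝ) : ℝ := μ * Real.log (Real.cosh (z / μ))

/-- Reparametrization `q(w) = (w, √(1-‖w‖²))` with `w` in the unit ball of `ℝ^{n-1}`. -/
def qmap (n : ℕ) (w : EuclideanSpace ℝ (Fin (n - 1))) : Fin n → ℝ :=
  fun i => if h : (i : ℕ) < n - 1 then w ⟨i, h⟩ else Real.sqrt (1 - ‖w‖ ^ 2)

/-- `f(q; Y) = (1/p) ∑ₖ h_μ(qᵀ yₖ)`. -/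
def ffun (n p : ℕ) (μ : ℝ) (Y : Matrix (Fin n) (Fin p) ℝ)
    (q : EuclideanSpace ℝ (Fin n)) : ℝ :=
  (p : ℝ)⁻¹ * ∑ k : Fin p, hmu μ (∑ i : Fin n, q i * Y i k)

/-- `g(w; Y) = f(q(w); Y)`. -/
def gfun (n p : ℕ) (μ : ℝ) (Y : Matrix (Fin n) (Fin p) ℝ)
    (w : EuclideanSpace ℝ (Fin (n - 1))) : ℝ :=
  (p : ℝ)⁻¹ * ∑ k : Fin p, hmu μ (∑ i : Fin n, qmap n w i * Y i k)

/-- Gradient `∇g(w; Y)` in `w`. -/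
def gradg (n p : ℕ) (μ : ℝ) (Y : Matrix (Fin n) (Fin p) ℝ)
    (w : EuclideanSpace ℝ (Fin (n - 1))) : EuclideanSpace ℝ (Fin (n - 1)) :=
  gradient (gfun n p μ Y) w

/-- Hessian `∇²g(w; Y)` in `w`, as a continuous linear map. -/
def hessg (n p : ℕ) (μ : ℝ) (Y : Matrix (Fin n) (Fin p) ℝ)
    (w : EuclideanSpace ℝ (Fin (n - 1))) :
    EuclideanSpace ℝ (Fin (n - 1)) →L[ℝ] EuclideanSpace ℝ (Fin (n - 1)) :=
  fderiv ℝ (gradg n p μ Y) w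

/-- The set `Γ = {w : ‖w‖ < √((4n-1)/(4n))}`. -/
def GammaSet (n : ℕ) : Set (EuclideanSpace ℝ (Fin (n - 1))) :=
  {w | ‖w‖ < Real.sqrt ((4 * (n : ℝ) - 1) / (4 * n))}

/-- Spectral (`ℓ²→ℓ²` operator) norm of а matrix. -/
def specNorm {m k : ℕ} (M : Matrix (Fin m) (Fin k) ℝ) : ℝ :=
  ‖LinearMap.toContinuousLinearMap (Matrix.toEuclideanLin M)‖

/-- Largest magnitude of an entry of a matrix. -/
def Minf {m k : ℕ} (M : Matrix (Fin m) (Fin k) ℝ) : ℝ := ⨆ i, ⨆ j, |M i j|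

/-- Condition number: ratio of largest to smallest singular value. -/
def kappa {n : ℕ} (s : Fin n → ℝ) : ℝ := (⨆ i, s i) / (⨅ i, s i)

/-- Signed standard basis vectors `{± e_i}` of `ℝ^n`. -/
def SignedBasis (n : ℕ) : Set (EuclideanSpace ℝ (Fin n)) :=
  {b | ∃ i : Fin n, b = EuclideanSpace.single i (1 : ℝ) ∨ b = -EuclideanSpace.single i (1 : ℝ)}

/-- Set of local minimizers of `f(·; Y)` over the unit sphere `S^{n-1}`. -/
def LocalMins (n p : ℕ) (μ : ℝ) (Y : Matrix (Fin n) (Fin p) ℝ) :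
    Set (EuclideanSpace ℝ (Fin n)) :=
  {q | q ∈ Metric.sphere (0 : EuclideanSpace ℝ (Fin n)) 1 ∧
       IsLocalMinOn (ffun n p μ Y) (Metric.sphere (0 : EuclideanSpace ℝ (Fin n)) 1) q}

/-- Expected objective `E_x[h_μ(q(w)ᵀ x)]` for `x` with i.i.d. `BG(θ)` entries. -/
def Gexp (n : ℕ) (θ μ : ℝ) (w : EuclideanSpace ℝ (Fin (n - 1))) : ℝ :=
  ∫ x, hmu μ (∑ i : Fin n, qmap n w i * x i) ∂(bgVec θ n)

/-- The function `s ↦ cosh √s` is convex on `[0, ∞)`. -/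
lemma convexOn_cosh_sqrt : ConvexOn ℝ (Set.Ici 0) fun s : ℝ => cosh √s := by
  have hs : ∀ s : ℝ, 0 ≤ s → HasSum (fun k : ℕ => s ^ k / ((2 * k).factorial : ℝ)) (cosh √s) := by
    intro s hs
    simpa [pow_mul, sq_sqrt hs] using Real.hasSum_cosh √s
  refine ⟨convex_Ici 0, fun x hx y hy a b ha hb hab => ?_⟩
  have hx : 0 ≤ x := hx
  have hy : 0 ≤ y := hy
  have hz : 0 ≤ a • x + b • y := by simp only [smul_eq_mul]; positivity
  refine hasSum_le (fun k => ?_) (hs _ hz) (((hs x hx).const_smul a).add ((hs y hy).const_smul b))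
  have := (convexOn_pow k).2 (Set.mem_Ici.2 hx) (Set.mem_Ici.2 hy) ha hb hab
  simp only [smul_eq_mul] at this ⊢
  calc _ ≤ (a * x ^ k + b * y ^ k) / ((2 * k).factorial : ℝ) := by gcongr
    _ = _ := by ring

lemma exp_mul_sub_le {κ v : ℝ} (h0 : 0 ≤ κ) (h1 : κ ≤ 1) (hv : 0 ≤ v) :
    exp (κ * v) - κ * v ≤ 1 + κ ^ 2 * (exp v - 1) := by
  have hs : ∀ u : ℝ, HasSum (fun k : ℕ => u ^ (k + 2) / ((k + 2).factorial : ℝ))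
      (exp u - 1 - u) := by
    intro u
    have := (hasSum_nat_add_iff' 2).2 (by
      exact NormedSpace.expSeries_div_hasSum_exp u)
    simpa [Finset.sum_range_succ, sub_sub, ← Real.exp_eq_exp_ℝ] using this
  have := hasSum_le (fun k => ?_) (hs (κ * v)) ((hs v).const_smul (κ ^ 2))
  · simp only [smul_eq_mul] at this
    nlinarith [sq_nonneg κ]
  · simp only [smul_eq_mul, mul_pow, pow_add κ k 2]
    have : κ ^ k ≤ 1 := pow_le_one₀ h0 h1
    calc κ ^ k * κ ^ 2 * v ^ (k + 2) / ((k + 2).factorial : ℝ)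
        ≤ 1 * κ ^ 2 * v ^ (k + 2) / ((k + 2).factorial : ℝ) := by gcongr
      _ = _ := by ring

lemma exp_integral_le_integral_exp {Ω : Type*} [MeasurableSpace Ω] {ν : Measure Ω}
    [IsProbabilityMeasure ν] {f : Ω → ℝ} (hf : Integrable f ν)
    (he : Integrable (fun x => exp (f x)) ν) : exp (∫ x, f x ∂ν) ≤ ∫ x, exp (f x) ∂ν :=
  convexOn_exp.map_integral_le continuous_exp.continuousOn isClosed_univ (by simp) hf he

section Pinelis

variable {H : Type*} [NormedAddCommGroup H] [InnerProductSpace ℝ H]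

/-- A first-order expansion of `cosh ‖·‖` in a Hilbert space with an explicit remainder. -/
lemma cosh_norm_add_le (a b : H) :
    cosh ‖a + b‖ ≤ cosh ‖a‖ * (exp ‖b‖ - ‖b‖) + ⟪(sinh ‖a‖ / ‖a‖) • a, b⟫ := by
  rcases eq_or_ne a 0 with rfl | ha
  · simp only [zero_add, norm_zero, cosh_zero, one_mul, sinh_zero, smul_zero, inner_zero_left,
      add_zero]
    have h1 := Real.self_le_sinh_iff.2 (norm_nonneg b)
    rw [← cosh_add_sinh]; linarith
  rcases eq_or_ne b 0 with rfl | hb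
  · simp
  have hA : 0 < ‖a‖ := norm_pos_iff.2 ha
  have hB : 0 < ‖b‖ := norm_pos_iff.2 hb
  set A := ‖a‖ with hAdef
  set B := ‖b‖ with hBdef
  obtain ⟨c, hc⟩ : ∃ c, c = ⟪a, b⟫ / (A * B) := ⟨_, rfl⟩
  have hin : ⟪a, b⟫ = c * (A * B) := by rw [hc]; field_simp
  have hcabs : |c| ≤ 1 := by rw [hc]; exact abs_real_inner_div_norm_mul_norm_le_one a b
  obtain ⟨hc1, hc2⟩ := abs_le.1 hcabs
  have key := convexOn_cosh_sqrt.2 (Set.mem_Ici.2 (sq_nonneg (A + B)))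
    (Set.mem_Ici.2 (sq_nonneg (A - B)))
    (show 0 ≤ (1 + c) / 2 by linarith) (show 0 ≤ (1 - c) / 2 by linarith) (by ring)
  have hsq : ((1 + c) / 2) • (A + B) ^ 2 + ((1 - c) / 2) • (A - B) ^ 2 = ‖a + b‖ ^ 2 := by
    rw [norm_add_sq_real, hin, ← hAdef, ← hBdef]; simp only [smul_eq_mul]; ring
  rw [hsq] at key
  simp only [sqrt_sq_eq_abs, cosh_abs, abs_norm, smul_eq_mul, cosh_add, cosh_sub] at key
  have hlin : ⟪(sinh A / A) • a, b⟫ = c * sinh A * B := by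
    rw [real_inner_smul_left, hin]; field_simp
  rw [hlin, ← cosh_add_sinh]
  have hs : 0 ≤ sinh B - B := sub_nonneg.2 (Real.self_le_sinh_iff.2 hB.le)
  have hsA : c * sinh A ≤ cosh A := by
    have h0 : 0 ≤ sinh A := Real.sinh_nonneg_iff.2 hA.le
    nlinarith [(Real.sinh_lt_cosh A).le]
  nlinarith [mul_le_mul_of_nonneg_right hsA hs]

variable {Ω : Type*} [MeasurableSpace Ω] {ν : Measure Ω}
variable [FiniteDimensional ℝ H]

lemma lintegral_cosh_norm_add_le {Y : Ω → H}
    (hexp : Integrable (fun x => exp ‖Y x‖) ν) (hint : Integrable Y ν) (h0 : ∫ x, Y x ∂ν = 0)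
    (a : H) :
    ∫⁻ x, ENNReal.ofReal (cosh ‖a + Y x‖) ∂ν ≤
      ENNReal.ofReal (cosh ‖a‖ * ∫ x, (exp ‖Y x‖ - ‖Y x‖) ∂ν) := by
  have hi1 : Integrable (fun x => cosh ‖a‖ * (exp ‖Y x‖ - ‖Y x‖)) ν :=
    (hexp.sub hint.norm).const_mul _
  have hi2 : Integrable (fun x => ⟪(sinh ‖a‖ / ‖a‖) • a, Y x⟫) ν := hint.const_inner _
  have hz : ∫ x, ⟪(sinh ‖a‖ / ‖a‖) • a, Y x⟫ ∂ν = 0 := by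
    rw [integral_inner hint, h0, inner_zero_right]
  have : cosh ‖a‖ * ∫ x, (exp ‖Y x‖ - ‖Y x‖) ∂ν =
      ∫ x, (cosh ‖a‖ * (exp ‖Y x‖ - ‖Y x‖) + ⟪(sinh ‖a‖ / ‖a‖) • a, Y x⟫) ∂ν := by
    rw [integral_add hi1 hi2, hz, add_zero, integral_const_mul]
  rw [this, ofReal_integral_eq_lintegral_ofReal (by exact hi1.add hi2)
    (.of_forall fun x => (cosh_pos _).le.trans (cosh_norm_add_le a (Y x)))]
  exact lintegral_mono fun x => ENNReal.ofReal_le_ofReal (cosh_norm_add_le a (Y x))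

variable [MeasurableSpace H] [BorelSpace H] [IsProbabilityMeasure ν]

lemma lintegral_pi_cosh_norm_sum_le {Y : Ω → H} (hY : Measurable Y)
    (hexp : Integrable (fun x => exp ‖Y x‖) ν) (hint : Integrable Y ν) (h0 : ∫ x, Y x ∂ν = 0)
    (p : ℕ) (a : H) :
    ∫⁻ x, ENNReal.ofReal (cosh ‖a + ∑ k, Y (x k)‖) ∂(Measure.pi fun _ : Fin p => ν) ≤
      ENNReal.ofReal (cosh ‖a‖ * (∫ x, (exp ‖Y x‖ - ‖Y x‖) ∂ν) ^ p) := by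
  have hM : 0 ≤ ∫ x, (exp ‖Y x‖ - ‖Y x‖) ∂ν :=
    integral_nonneg fun x => show 0 ≤ exp ‖Y x‖ - ‖Y x‖ by linarith [add_one_le_exp ‖Y x‖]
  induction p generalizing a with
  | zero => simp
  | succ p ih =>
    have hmp := (measurePreserving_piFinSuccAbove (fun _ : Fin (p + 1) => ν) 0).symm
    rw [← hmp.lintegral_comp_emb (MeasurableEquiv.measurableEmbedding _),
      lintegral_prod _ (by fun_prop)]
    have hsum : ∀ (x : Ω) (y : Fin p → Ω),
        a + ∑ k, Y ((MeasurableEquiv.piFinSuccAbove (fun _ : Fin (p + 1) => Ω) 0).symm (x, y) k) =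
          (a + Y x) + ∑ k, Y (y k) := by
      intro x y
      simp [Fin.sum_univ_succ, MeasurableEquiv.piFinSuccAbove, add_assoc]
    simp_rw [hsum]
    calc _ ≤ ∫⁻ x, ENNReal.ofReal (cosh ‖a + Y x‖) *
            ENNReal.ofReal ((∫ x, (exp ‖Y x‖ - ‖Y x‖) ∂ν) ^ p) ∂ν := by
          refine lintegral_mono fun x => ?_
          rw [← ENNReal.ofReal_mul (cosh_pos _).le]
          exact ih _
      _ ≤ _ := by
          rw [lintegral_mul_const' _ _ ENNReal.ofReal_ne_top]
          refine (mul_le_mul_left (lintegral_cosh_norm_add_le hexp hint h0 a) _).trans ?_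
          rw [← ENNReal.ofReal_mul (mul_nonneg (cosh_pos _).le hM), pow_succ', mul_assoc]

/-- A Bernstein inequality for sums of i.i.d. random vectors in a finite-dimensional Hilbert
space with an exponential moment. -/
lemma measure_le_norm_sum_sub_integral_le {Z : Ω → H} (hZ : Measurable Z) {R t : ℝ} (hR : 0 < R)
    (ht : 0 < t) (hexp : Integrable (fun x => exp (‖Z x‖ / R)) ν)
    (hbound : (∫ x, exp (‖Z x‖ / R) ∂ν) ^ 2 ≤ 3 / 2) (p : ℕ) :
    (Measure.pi fun _ : Fin p => ν) {x | p * t ≤ ‖∑ k, (Z (x k) - ∫ y, Z y ∂ν)‖} ≤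
      ENNReal.ofReal (2 * exp (-(p * t ^ 2) / (2 * R ^ 2 + 2 * R * t))) := by
  have hint' : Integrable (fun x => ‖Z x‖ / R) ν := by
    refine hexp.mono' (by fun_prop) (.of_forall fun x => ?_)
    rw [Real.norm_of_nonneg (by positivity)]
    linarith [add_one_le_exp (‖Z x‖ / R)]
  have hint : Integrable Z ν := by
    refine (hint'.mul_const R).mono' hZ.aestronglyMeasurable (.of_forall fun x => ?_)
    rw [div_mul_cancel₀ _ hR.ne']
  set m := ∫ y, Z y ∂ν with hm
  have hmle : exp (‖m‖ / R) ≤ ∫ x, exp (‖Z x‖ / R) ∂ν := by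
    refine le_trans (exp_le_exp.2 ?_) (exp_integral_le_integral_exp hint' hexp)
    rw [integral_div]
    gcongr
    exact norm_integral_le_integral_norm _
  have hle : ∀ x, exp (‖Z x - m‖ / R) ≤ exp (‖Z x‖ / R) * exp (‖m‖ / R) := by
    intro x
    rw [← exp_add, ← add_div]
    gcongr
    exact norm_sub_le _ _
  have hexpc : Integrable (fun x => exp (‖Z x - m‖ / R)) ν := by
    refine (hexp.mul_const (exp (‖m‖ / R))).mono' (by fun_prop) (.of_forall fun x => ?_)
    rw [Real.norm_of_nonneg (exp_pos _).le]
    exact hle x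
  have hexpc_le : ∫ x, exp (‖Z x - m‖ / R) ∂ν ≤ 3 / 2 := by
    calc _ ≤ ∫ x, exp (‖Z x‖ / R) * exp (‖m‖ / R) ∂ν :=
          integral_mono hexpc (hexp.mul_const _) hle
      _ ≤ (∫ x, exp (‖Z x‖ / R) ∂ν) ^ 2 := by
          rw [integral_mul_const, sq]
          gcongr
      _ ≤ _ := hbound
  obtain ⟨κ, hκ⟩ : ∃ κ, κ = t / (R + t) := ⟨_, rfl⟩
  have hκ0 : 0 < κ := by rw [hκ]; positivity
  have hκ1 : κ ≤ 1 := by rw [hκ, div_le_one (by positivity)]; linarith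
  set Y : Ω → H := fun x => (κ / R) • (Z x - m) with hYdef
  have hY : Measurable Y := by fun_prop
  have hnorm : ∀ x, ‖Y x‖ = κ * (‖Z x - m‖ / R) := by
    intro x
    rw [hYdef, norm_smul, Real.norm_of_nonneg (by positivity)]
    ring
  have hYint : Integrable Y ν := (hint.sub (integrable_const m)).smul (κ / R)
  have hY0 : ∫ x, Y x ∂ν = 0 := by
    rw [hYdef, integral_smul, integral_sub hint (integrable_const m)]
    simp [hm]
  have hYexp : Integrable (fun x => exp ‖Y x‖) ν := by
    refine hexpc.mono' (by fun_prop) (.of_forall fun x => ?_)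
    rw [Real.norm_of_nonneg (exp_pos _).le, hnorm]
    gcongr
    exact mul_le_of_le_one_left (by positivity) hκ1
  have hM : ∫ x, (exp ‖Y x‖ - ‖Y x‖) ∂ν ≤ exp (κ ^ 2 / 2) := by
    calc _ ≤ ∫ x, (1 + κ ^ 2 * (exp (‖Z x - m‖ / R) - 1)) ∂ν := by
          refine integral_mono (hYexp.sub hYint.norm)
            ((integrable_const _).add ((hexpc.sub (integrable_const _)).const_mul _)) fun x => ?_
          simp only [hnorm]
          exact exp_mul_sub_le hκ0.le hκ1 (by positivity)
      _ = 1 + κ ^ 2 * (∫ x, exp (‖Z x - m‖ / R) ∂ν - 1) := by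
          rw [integral_add (integrable_const _)
            (by exact (hexpc.sub (integrable_const _)).const_mul _), integral_const_mul,
          integral_sub hexpc (integrable_const _)]
          simp
      _ ≤ κ ^ 2 / 2 + 1 := by nlinarith [sq_nonneg κ]
      _ ≤ _ := add_one_le_exp _
  have hM0 : 0 ≤ ∫ x, (exp ‖Y x‖ - ‖Y x‖) ∂ν :=
    integral_nonneg fun x => show 0 ≤ exp ‖Y x‖ - ‖Y x‖ by linarith [add_one_le_exp ‖Y x‖]
  have hmgf := lintegral_pi_cosh_norm_sum_le hY hYexp hYint hY0 p 0
  simp only [zero_add, norm_zero, cosh_zero, one_mul] at hmgf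
  set s : ℝ := κ / R * (p * t) with hs
  have hs0 : 0 ≤ s := by positivity
  have hsub : {x : Fin p → Ω | p * t ≤ ‖∑ k, (Z (x k) - m)‖} ⊆
      {x | ENNReal.ofReal (exp s / 2) ≤ ENNReal.ofReal (cosh ‖∑ k, Y (x k)‖)} := by
    intro x hx
    refine ENNReal.ofReal_le_ofReal ?_
    have h1 : s ≤ ‖∑ k, Y (x k)‖ := by
      rw [hYdef, ← Finset.smul_sum, norm_smul, Real.norm_of_nonneg (by positivity), hs]
      exact mul_le_mul_of_nonneg_left hx (by positivity)
    calc exp s / 2 ≤ cosh s := by rw [cosh_eq]; linarith [exp_pos (-s)]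
      _ ≤ _ := by rw [cosh_le_cosh, abs_of_nonneg hs0, abs_of_nonneg (norm_nonneg _)]; exact h1
  have hmarkov := meas_ge_le_lintegral_div (μ := Measure.pi fun _ : Fin p => ν)
    (f := fun x => ENNReal.ofReal (cosh ‖∑ k, Y (x k)‖))
    (show Measurable _ by fun_prop).aemeasurable
    (ε := ENNReal.ofReal (exp s / 2)) (by simp [exp_pos]) ENNReal.ofReal_ne_top
  refine (measure_mono hsub).trans (hmarkov.trans ((ENNReal.div_le_div_right hmgf _).trans ?_))
  rw [← ENNReal.ofReal_div_of_pos (by positivity)]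
  refine ENNReal.ofReal_le_ofReal ?_
  have hexpo : κ ^ 2 / 2 * p - s ≤ -(p * t ^ 2) / (2 * R ^ 2 + 2 * R * t) := by
    have h1 : s = p * t ^ 2 / (R * (R + t)) := by rw [hs, hκ]; field_simp
    have h2 : κ ^ 2 / 2 * p ≤ p * t ^ 2 / (2 * (R * (R + t))) := by
      have : κ ^ 2 / 2 * p = p * t ^ 2 / (2 * (R + t) ^ 2) := by rw [hκ]; field_simp
      rw [this]
      gcongr
      nlinarith
    have h3 : -(p * t ^ 2) / (2 * R ^ 2 + 2 * R * t) =
        p * t ^ 2 / (2 * (R * (R + t))) - p * t ^ 2 / (R * (R + t)) := by field_simp; ring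
    linarith
  calc _ ≤ exp (κ ^ 2 / 2) ^ p / (exp s / 2) := by gcongr
    _ = 2 * exp (κ ^ 2 / 2 * p - s) := by
        rw [← exp_nat_mul, exp_sub, mul_comm (p : ℝ)]; field_simp
    _ ≤ _ := by gcongr

end Pinelis

lemma hasDerivAt_real_tanh (x : ℝ) : HasDerivAt tanh (1 / cosh x ^ 2) x := by
  have h := (Real.hasDerivAt_sinh x).fun_div (Real.hasDerivAt_cosh x) (cosh_pos x).ne'
  have he : (fun y => sinh y / cosh y) = tanh := by
    ext y; rw [tanh_eq_sinh_div_cosh]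
  rw [he] at h
  refine h.congr_deriv ?_
  rw [← sq, ← sq, cosh_sq x, add_sub_cancel_left]

lemma hasDerivAt_hmu {μ : ℝ} (hμ : μ ≠ 0) (z : ℝ) : HasDerivAt (hmu μ) (tanh (z / μ)) z := by
  have h1 : HasDerivAt (fun z => z / μ) (1 / μ) z := (hasDerivAt_id z).div_const μ
  have h2 := (h1.cosh.log (cosh_pos _).ne').const_mul μ
  refine HasDerivAt.congr_deriv (f := hmu μ) h2 ?_
  rw [tanh_eq_sinh_div_cosh]
  field_simp

lemma abs_tanh_le_one (x : ℝ) : |tanh x| ≤ 1 := by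
  rw [tanh_eq_sinh_div_cosh, abs_div, abs_of_pos (cosh_pos x), div_le_one (cosh_pos x)]
  rw [abs_sinh, ← cosh_abs]
  exact (sinh_lt_cosh _).le

lemma one_sub_norm_sq_pos {E : Type*} [NormedAddCommGroup E] {w : E} (hw : ‖w‖ < 1) :
    0 < 1 - ‖w‖ ^ 2 := by
  nlinarith [norm_nonneg w]

section Hessian

variable {E : Type*} [NormedAddCommGroup E] [InnerProductSpace ℝ E]

/-- The inner product of the point `(w, √(1 - ‖w‖²))` of the sphere with `(a, c)`. -/
def sphereInner (a : E) (c : ℝ) (w : E) : ℝ := ⟪a, w⟫ + c * √(1 - ‖w‖ ^ 2)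

/-- The gradient of `sphereInner a c`. -/
def sphereGrad (a : E) (c : ℝ) (w : E) : E := a - (c / √(1 - ‖w‖ ^ 2)) • w

/-- The Hessian at `w` of `hmu μ ∘ sphereInner a c`. -/
def sphereHess (μ : ℝ) (w a : E) (c : ℝ) : E →L[ℝ] E :=
  (1 / (μ * cosh (sphereInner a c w / μ) ^ 2)) •
      (innerSL ℝ (sphereGrad a c w)).smulRight (sphereGrad a c w) -
    (tanh (sphereInner a c w / μ) * c) •
      ((1 / √(1 - ‖w‖ ^ 2)) • ContinuousLinearMap.id ℝ E +
        (1 / √(1 - ‖w‖ ^ 2) ^ 3) • (innerSL ℝ w).smulRight w)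

lemma hasFDerivAt_sqrt_one_sub {w : E} (hw : ‖w‖ < 1) :
    HasFDerivAt (fun v : E => √(1 - ‖v‖ ^ 2)) ((-(1 / √(1 - ‖w‖ ^ 2))) • innerSL ℝ w) w := by
  have h := (((hasStrictFDerivAt_norm_sq w).hasFDerivAt).const_sub 1).sqrt
    (one_sub_norm_sq_pos hw).ne'
  refine h.congr_fderiv ?_
  ext v
  simp
  field_simp

lemma hasFDerivAt_sphereInner (a : E) (c : ℝ) {w : E} (hw : ‖w‖ < 1) :
    HasFDerivAt (sphereInner a c) (innerSL ℝ (sphereGrad a c w)) w := by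
  have h := ((innerSL ℝ a).hasFDerivAt (x := w)).add ((hasFDerivAt_sqrt_one_sub hw).const_mul c)
  refine HasFDerivAt.congr_fderiv (f := sphereInner a c) h ?_
  ext v
  simp [sphereGrad]
  ring

lemma hasFDerivAt_sphereGrad (a : E) (c : ℝ) {w : E} (hw : ‖w‖ < 1) :
    HasFDerivAt (sphereGrad a c) (-(c • ((1 / √(1 - ‖w‖ ^ 2)) • ContinuousLinearMap.id ℝ E +
        (1 / √(1 - ‖w‖ ^ 2) ^ 3) • (innerSL ℝ w).smulRight w))) w := by
  have hr : 0 < √(1 - ‖w‖ ^ 2) := sqrt_pos.2 (one_sub_norm_sq_pos hw)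
  have h1 : HasFDerivAt (fun v : E => c / √(1 - ‖v‖ ^ 2)) _ w :=
    ((hasDerivAt_inv hr.ne').comp_hasFDerivAt w (hasFDerivAt_sqrt_one_sub hw)).const_mul c
  have h := (h1.smul (hasFDerivAt_id w)).const_sub a
  refine HasFDerivAt.congr_fderiv (f := sphereGrad a c) h ?_
  ext v
  simp
  module

lemma hasGradientAt_hmu_sphereInner [CompleteSpace E] {μ : ℝ} (hμ : μ ≠ 0) (a : E) (c : ℝ) {w : E}
    (hw : ‖w‖ < 1) :
    HasGradientAt (fun v => hmu μ (sphereInner a c v))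
      (tanh (sphereInner a c w / μ) • sphereGrad a c w) w := by
  rw [hasGradientAt_iff_hasFDerivAt]
  have h := (hasDerivAt_hmu hμ (sphereInner a c w)).comp_hasFDerivAt w
    (hasFDerivAt_sphereInner a c hw)
  refine HasFDerivAt.congr_fderiv (f := fun v => hmu μ (sphereInner a c v)) h ?_
  ext v
  simp

lemma hasFDerivAt_grad_hmu_sphereInner (μ : ℝ) (a : E) (c : ℝ) {w : E} (hw : ‖w‖ < 1) :
    HasFDerivAt (fun v => tanh (sphereInner a c v / μ) • sphereGrad a c v)
      (sphereHess μ w a c) w := by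
  have h1 := (hasDerivAt_real_tanh (sphereInner a c w / μ)).comp_hasFDerivAt w
    ((hasFDerivAt_sphereInner a c hw).mul_const μ⁻¹)
  have h := h1.smul (hasFDerivAt_sphereGrad a c hw)
  refine HasFDerivAt.congr_fderiv
    (f := fun v => tanh (sphereInner a c v / μ) • sphereGrad a c v) h ?_
  ext v
  simp [sphereHess, ← div_eq_mul_inv]
  module

lemma fderiv_gradient_average_hmu_sphereInner [CompleteSpace E] {μ : ℝ} (hμ : μ ≠ 0) {p : ℕ}
    (a : Fin p → E) (c : Fin p → ℝ) {w : E} (hw : ‖w‖ < 1) :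
    fderiv ℝ (gradient fun v => (p : ℝ)⁻¹ * ∑ k, hmu μ (sphereInner (a k) (c k) v)) w =
      (p : ℝ)⁻¹ • ∑ k, sphereHess μ w (a k) (c k) := by
  have hgrad : ∀ v : E, ‖v‖ < 1 →
      gradient (fun v => (p : ℝ)⁻¹ * ∑ k, hmu μ (sphereInner (a k) (c k) v)) v =
        (p : ℝ)⁻¹ • ∑ k, tanh (sphereInner (a k) (c k) v / μ) • sphereGrad (a k) (c k) v := by
    intro v hv
    refine HasGradientAt.gradient ?_
    rw [hasGradientAt_iff_hasFDerivAt, map_smul, map_sum]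
    exact (HasFDerivAt.fun_sum fun k _ =>
      (hasGradientAt_hmu_sphereInner hμ (a k) (c k) hv).hasFDerivAt).const_mul (p : ℝ)⁻¹
  have hev : gradient (fun v => (p : ℝ)⁻¹ * ∑ k, hmu μ (sphereInner (a k) (c k) v)) =ᶠ[nhds w]
      fun v => (p : ℝ)⁻¹ • ∑ k, tanh (sphereInner (a k) (c k) v / μ) • sphereGrad (a k) (c k) v :=
    Filter.mem_of_superset ((isOpen_lt continuous_norm continuous_const).mem_nhds hw) hgrad
  rw [hev.fderiv_eq]
  exact ((HasFDerivAt.fun_sum fun k _ =>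
    hasFDerivAt_grad_hmu_sphereInner μ (a k) (c k) hw).const_smul (p : ℝ)⁻¹).fderiv

end Hessian

section Frobenius

variable {m : ℕ}

/-- The matrix entries of an operator on `ℝ^m` as a vector of the Hilbert space `ℝ^(m × m)`. -/
def frobVec (m : ℕ) : (EuclideanSpace ℝ (Fin m) →L[ℝ] EuclideanSpace ℝ (Fin m)) →L[ℝ]
    EuclideanSpace ℝ (Fin m × Fin m) :=
  LinearMap.toContinuousLinearMap
    { toFun := fun A => WithLp.toLp 2 fun ij => A (EuclideanSpace.single ij.2 1) ij.1
      map_add' := fun A B => by ext; simp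
      map_smul' := fun r A => by ext; simp }

lemma frobVec_apply (A : EuclideanSpace ℝ (Fin m) →L[ℝ] EuclideanSpace ℝ (Fin m))
    (ij : Fin m × Fin m) : frobVec m A ij = A (EuclideanSpace.single ij.2 1) ij.1 := rfl

lemma norm_frobVec_sq (A : EuclideanSpace ℝ (Fin m) →L[ℝ] EuclideanSpace ℝ (Fin m)) :
    ‖frobVec m A‖ ^ 2 = ∑ j, ‖A (EuclideanSpace.single j 1)‖ ^ 2 := by
  simp only [EuclideanSpace.real_norm_sq_eq, frobVec_apply]
  rw [Fintype.sum_prod_type_right]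

lemma norm_le_norm_frobVec (A : EuclideanSpace ℝ (Fin m) →L[ℝ] EuclideanSpace ℝ (Fin m)) :
    ‖A‖ ≤ ‖frobVec m A‖ := by
  refine A.opNorm_le_bound (norm_nonneg _) fun v => ?_
  have hv : A v = ∑ j, v j • A (EuclideanSpace.single j 1) := by
    conv_lhs => rw [← (EuclideanSpace.basisFun (Fin m) ℝ).sum_repr v]
    simp
  have h1 : ‖A v‖ ≤ ∑ j, ‖v j‖ * ‖A (EuclideanSpace.single j 1)‖ := by
    rw [hv]
    exact (norm_sum_le _ _).trans_eq (by simp [norm_smul])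
  have h2 := Finset.sum_mul_sq_le_sq_mul_sq Finset.univ (fun j => ‖v j‖)
    (fun j => ‖A (EuclideanSpace.single j 1)‖)
  rw [← norm_frobVec_sq, ← EuclideanSpace.norm_sq_eq] at h2
  refine h1.trans (le_of_sq_le_sq ?_ (by positivity))
  rw [mul_pow, mul_comm]
  exact h2

lemma norm_frobVec_smulRight (a b : EuclideanSpace ℝ (Fin m)) :
    ‖frobVec m ((innerSL ℝ a).smulRight b)‖ = ‖a‖ * ‖b‖ := by
  rw [← sq_eq_sq₀ (by positivity) (by positivity), norm_frobVec_sq, mul_pow,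
    EuclideanSpace.norm_sq_eq a, Finset.sum_mul]
  simp [norm_smul, mul_pow, EuclideanSpace.inner_single_right]

lemma norm_frobVec_id : ‖frobVec m (ContinuousLinearMap.id ℝ _)‖ = √m := by
  rw [← sqrt_sq (norm_nonneg _), norm_frobVec_sq]
  simp

lemma norm_frobVec_sphereHess_le {μ : ℝ} (hμ : 0 < μ) (hμm : μ * √m ≤ 1) (hμ1 : μ ≤ 1)
    {w : EuclideanSpace ℝ (Fin m)} (hw : ‖w‖ ≤ 1 / 4) (a : EuclideanSpace ℝ (Fin m)) (c : ℝ) :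
    ‖frobVec m (sphereHess μ w a c)‖ ≤ (2 * (‖a‖ ^ 2 + c ^ 2) + 1) / μ := by
  set r := √(1 - ‖w‖ ^ 2) with hr
  have hw0 := norm_nonneg w
  have hr0 : 15 / 16 ≤ r := le_sqrt_of_sq_le (by nlinarith)
  have hrinv : 1 / r ≤ 16 / 15 := by
    rw [div_le_div_iff₀ (by linarith) (by norm_num)]; linarith
  have hrinv0 : 0 ≤ 1 / r := by positivity
  have hrinv3 : 1 / r ^ 3 ≤ (16 / 15) ^ 3 := by
    rw [← _root_.one_div_pow]; gcongr
  have hζ : ‖sphereGrad a c w‖ ≤ ‖a‖ + 4 / 15 * |c| := by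
    refine (norm_sub_le _ _).trans ?_
    rw [norm_smul, Real.norm_eq_abs, ← hr, abs_div, abs_of_pos (show 0 < r by linarith),
      div_eq_mul_one_div]
    have : |c| * (1 / r) * ‖w‖ ≤ |c| * (16 / 15) * (1 / 4) := by gcongr
    linarith
  have hζ2 : ‖sphereGrad a c w‖ * ‖sphereGrad a c w‖ ≤ 11 / 10 * (‖a‖ ^ 2 + c ^ 2) := by
    have := mul_self_le_mul_self (norm_nonneg _) hζ
    nlinarith [sq_abs c, sq_nonneg (4 / 15 * ‖a‖ - |c|)]
  have hcosh : |1 / (μ * cosh (sphereInner a c w / μ) ^ 2)| ≤ 1 / μ := by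
    rw [abs_of_pos (by positivity)]
    gcongr
    exact le_mul_of_one_le_right hμ.le (one_le_pow₀ (one_le_cosh _))
  have hsecond : ‖frobVec m ((1 / r) • ContinuousLinearMap.id ℝ _ +
      (1 / r ^ 3) • (innerSL ℝ w).smulRight w)‖ ≤ 6 / 5 / μ := by
    rw [map_add, map_smul, map_smul]
    refine (norm_add_le _ _).trans ?_
    rw [norm_smul, norm_smul, norm_frobVec_id, norm_frobVec_smulRight,
      Real.norm_of_nonneg hrinv0, Real.norm_of_nonneg (by positivity), le_div_iff₀ hμ]
    have h1 : 1 / r * (μ * √m) ≤ 16 / 15 * 1 := by gcongr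
    have h2 : 1 / r ^ 3 * (‖w‖ * ‖w‖) * μ ≤ (16 / 15) ^ 3 * (1 / 4 * (1 / 4)) * 1 := by gcongr
    nlinarith
  rw [sphereHess, ← hr, map_sub, map_smul, map_smul]
  refine (norm_sub_le _ _).trans ?_
  rw [norm_smul, norm_smul, norm_frobVec_smulRight, Real.norm_eq_abs, Real.norm_eq_abs, abs_mul]
  have h1 : |1 / (μ * cosh (sphereInner a c w / μ) ^ 2)| *
      (‖sphereGrad a c w‖ * ‖sphereGrad a c w‖) ≤ 1 / μ * (11 / 10 * (‖a‖ ^ 2 + c ^ 2)) := by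
    gcongr
  have h2 : |tanh (sphereInner a c w / μ)| * |c| * ‖frobVec m ((1 / r) •
      ContinuousLinearMap.id ℝ _ + (1 / r ^ 3) • (innerSL ℝ w).smulRight w)‖ ≤
      1 * |c| * (6 / 5 / μ) := by
    gcongr
    exact abs_tanh_le_one _
  refine (add_le_add h1 h2).trans ?_
  have h3 : 11 / 10 * (‖a‖ ^ 2 + c ^ 2) + 6 / 5 * |c| ≤ 2 * (‖a‖ ^ 2 + c ^ 2) + 1 := by
    nlinarith [sq_abs c, sq_nonneg (|c| - 1), sq_nonneg ‖a‖]
  calc _ = (11 / 10 * (‖a‖ ^ 2 + c ^ 2) + 6 / 5 * |c|) / μ := by ring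
    _ ≤ _ := by gcongr

lemma continuous_sphereHess (μ : ℝ) (w : EuclideanSpace ℝ (Fin m)) :
    Continuous fun y : EuclideanSpace ℝ (Fin m) × ℝ => sphereHess μ w y.1 y.2 := by
  have hG : Continuous fun y : EuclideanSpace ℝ (Fin m) × ℝ => sphereGrad y.1 y.2 w := by
    unfold sphereGrad; fun_prop
  have hI : Continuous fun y : EuclideanSpace ℝ (Fin m) × ℝ => sphereInner y.1 y.2 w / μ := by
    unfold sphereInner; fun_prop
  have htanh : Continuous tanh :=
    continuous_iff_continuousAt.2 fun x => (hasDerivAt_real_tanh x).continuousAt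
  unfold sphereHess
  refine Continuous.sub (Continuous.fun_smul ?_ ?_) (Continuous.fun_smul ?_ continuous_const)
  · simp only [one_div, mul_inv]
    refine continuous_const.mul (Continuous.inv₀ (by fun_prop) fun y => ?_)
    exact (pow_pos (cosh_pos _) 2).ne'
  · exact (((ContinuousLinearMap.smulRightL ℝ (EuclideanSpace ℝ (Fin m))
      (EuclideanSpace ℝ (Fin m))).continuous.comp ((innerSL ℝ).continuous.comp hG))).clm_apply hG
  · exact (htanh.comp hI).mul continuous_snd

end Frobenius

section BernoulliGaussian

lemma isProbabilityMeasure_bg {θ : ℝ} (hθ : θ ∈ Set.Ioo (0 : ℝ) 1) :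
    IsProbabilityMeasure (bg θ) := by
  constructor
  have h1 : θ.toNNReal + (1 - θ).toNNReal = 1 := by
    rw [← Real.toNNReal_add hθ.1.le (by linarith [hθ.2])]
    simp
  simp only [bg, Measure.add_apply, Measure.smul_apply, measure_univ, ENNReal.smul_def,
    smul_eq_mul, mul_one]
  exact_mod_cast h1

lemma gaussianPDFReal_mul_exp_sq (s x : ℝ) :
    gaussianPDFReal 0 1 x * exp (s * x ^ 2) = (√(2 * π))⁻¹ * exp (-(1 / 2 - s) * x ^ 2) := by
  rw [gaussianPDFReal, mul_assoc, ← exp_add]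
  simp only [NNReal.coe_one, mul_one, sub_zero]
  congr 2
  ring

lemma integrable_exp_sq_gaussianReal {s : ℝ} (hs : s < 1 / 2) :
    Integrable (fun x => exp (s * x ^ 2)) (gaussianReal 0 1) := by
  rw [gaussianReal_of_var_ne_zero _ one_ne_zero,
    integrable_withDensity_iff_integrable_smul' (measurable_gaussianPDF _ _)
      (.of_forall fun _ => gaussianPDF_lt_top)]
  simp only [toReal_gaussianPDF, smul_eq_mul, gaussianPDFReal_mul_exp_sq]
  exact (integrable_exp_neg_mul_sq (by linarith)).const_mul _

lemma integral_exp_sq_gaussianReal {s : ℝ} (hs : s < 1 / 2) :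
    ∫ x, exp (s * x ^ 2) ∂gaussianReal 0 1 = √(1 / (1 - 2 * s)) := by
  rw [integral_gaussianReal_eq_integral_smul one_ne_zero]
  simp only [smul_eq_mul, gaussianPDFReal_mul_exp_sq]
  rw [integral_const_mul, integral_gaussian, ← sqrt_inv, ← sqrt_mul (by positivity)]
  congr 1
  have h1 : 1 / 2 - s ≠ 0 := by linarith
  have h2 : 1 - 2 * s ≠ 0 := by linarith
  field_simp

lemma integrable_exp_sq_bg (θ : ℝ) {s : ℝ} (hs : s < 1 / 2) :
    Integrable (fun x => exp (s * x ^ 2)) (bg θ) := by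
  refine Integrable.add_measure ?_ ?_
  · exact (integrable_exp_sq_gaussianReal hs).smul_measure_nnreal
  · exact (integrable_dirac (by finiteness)).smul_measure_nnreal

lemma integral_exp_sq_bg_le {θ : ℝ} (hθ : θ ∈ Set.Ioo (0 : ℝ) 1) {s : ℝ} (hs0 : 0 ≤ s)
    (hs : s < 1 / 2) : ∫ x, exp (s * x ^ 2) ∂bg θ ≤ √(1 / (1 - 2 * s)) := by
  have hg : 1 ≤ √(1 / (1 - 2 * s)) := by
    rw [one_le_sqrt, le_div_iff₀ (by linarith)]; linarith
  have h1 := (integrable_exp_sq_gaussianReal hs).smul_measure_nnreal (c := θ.toNNReal)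
  have h2 : Integrable (fun x : ℝ => exp (s * x ^ 2)) ((1 - θ).toNNReal • Measure.dirac 0) :=
    (integrable_dirac (by finiteness)).smul_measure_nnreal
  rw [bg, integral_add_measure h1 h2, integral_smul_nnreal_measure, integral_smul_nnreal_measure,
    integral_exp_sq_gaussianReal hs, integral_dirac]
  simp only [NNReal.smul_def, Real.coe_toNNReal _ hθ.1.le,
    Real.coe_toNNReal _ (sub_nonneg.2 hθ.2.le), smul_eq_mul]
  rw [zero_pow two_ne_zero, mul_zero, exp_zero]
  nlinarith [hθ.1, hθ.2]

lemma integrable_exp_sum_sq_bgVec (θ : ℝ) (n : ℕ) {s : ℝ} (hs : s < 1 / 2) :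
    Integrable (fun x : Fin n → ℝ => exp (s * ∑ i, x i ^ 2)) (bgVec θ n) := by
  simp only [Finset.mul_sum, exp_sum]
  exact Integrable.fintype_prod fun _ => integrable_exp_sq_bg θ hs

lemma integral_exp_sum_sq_bgVec_le {θ : ℝ} (hθ : θ ∈ Set.Ioo (0 : ℝ) 1) (n : ℕ) {s : ℝ}
    (hs0 : 0 ≤ s) (hs : s < 1 / 2) :
    ∫ x : Fin n → ℝ, exp (s * ∑ i, x i ^ 2) ∂bgVec θ n ≤ √(1 / (1 - 2 * s)) ^ n := by
  simp only [Finset.mul_sum, exp_sum, bgVec]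
  rw [integral_fintype_prod_eq_pow (fun x : ℝ => exp (s * x ^ 2)), Fintype.card_fin]
  gcongr
  exact integral_exp_sq_bg_le hθ hs0 hs

lemma integral_exp_sum_sq_bgVec_sq_le {θ : ℝ} (hθ : θ ∈ Set.Ioo (0 : ℝ) 1) {n : ℕ} (hn : 0 < n) :
    (∫ x : Fin n → ℝ, exp (1 / (8 * n) * ∑ i, x i ^ 2) ∂bgVec θ n) ^ 2 ≤ 4 / 3 := by
  have hn1 : (1 : ℝ) ≤ n := by exact_mod_cast hn
  have hs : 1 / (8 * (n : ℝ)) < 1 / 2 := by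
    rw [div_lt_div_iff₀ (by positivity) (by norm_num)]; linarith
  have h := integral_exp_sum_sq_bgVec_le hθ n (s := 1 / (8 * n)) (by positivity) hs
  have hquarter : 1 / (4 * (n : ℝ)) ≤ 1 / 4 := by gcongr; linarith
  have he : 1 - 2 * (1 / (8 * (n : ℝ))) = 1 + -(1 / (4 * n)) := by field_simp; ring
  have hbern : 3 / 4 ≤ (1 + -(1 / (4 * (n : ℝ)))) ^ n := by
    refine le_trans (le_of_eq ?_) (one_add_mul_le_pow (by linarith) n)
    field_simp
    norm_num
  calc _ ≤ (√(1 / (1 - 2 * (1 / (8 * (n : ℝ))))) ^ n) ^ 2 := by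
        gcongr
    _ = 1 / (1 + -(1 / (4 * (n : ℝ)))) ^ n := by
        rw [← pow_mul, mul_comm n, pow_mul, he, sq_sqrt, _root_.one_div_pow]
        have : 0 ≤ 1 + -(1 / (4 * (n : ℝ))) := by linarith
        positivity
    _ ≤ 1 / (3 / 4) := by gcongr
    _ = _ := by norm_num

/-- Transposing a matrix with i.i.d. entries yields the i.i.d. product of the laws of its
columns. -/
lemma measurePreserving_swap_bgMatrix {θ : ℝ} (hθ : θ ∈ Set.Ioo (0 : ℝ) 1) (n p : ℕ) :
    MeasurePreserving (fun (X : Fin n → Fin p → ℝ) k i => X i k) (bgMatrix θ n p)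
      (Measure.pi fun _ : Fin p => bgVec θ n) := by
  have := isProbabilityMeasure_bg hθ
  refine ⟨by fun_prop, (Measure.pi_eq_generateFrom (fun _ => generateFrom_pi)
    (fun _ => isPiSystem_pi) (fun _ => ?_) ?_).symm⟩
  · exact Measure.FiniteSpanningSetsIn.pi fun _ => (bg θ).toFiniteSpanningSetsIn
  · intro s hs
    choose u hu hus using hs
    have hpre : (fun (X : Fin n → Fin p → ℝ) k i => X i k) ⁻¹' (Set.univ.pi s) =
        Set.univ.pi fun i => Set.univ.pi fun k => u k i := by
      ext X
      simp only [← hus, Set.mem_preimage, Set.mem_univ_pi]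
      exact forall_comm
    have hmeas : MeasurableSet (Set.univ.pi s) := by
      refine MeasurableSet.univ_pi fun k => ?_
      rw [← hus]
      exact MeasurableSet.univ_pi fun i => hu k i (Set.mem_univ i)
    rw [Measure.map_apply (by fun_prop) hmeas, hpre, bgMatrix]
    simp only [← hus, bgVec, Measure.pi_pi]
    exact Finset.prod_comm

end BernoulliGaussian

section Average

variable {α F H : Type*} [MeasurableSpace α] {ν : Measure α} [IsProbabilityMeasure ν]
  [NormedAddCommGroup F] [NormedSpace ℝ F]
  [NormedAddCommGroup H] [InnerProductSpace ℝ H] [FiniteDimensional ℝ H]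
  [MeasurableSpace H] [BorelSpace H]

lemma integral_average_pi {Q : α → F} (hQ : Integrable Q ν) {p : ℕ} (hp : 0 < p) :
    ∫ x, (p : ℝ)⁻¹ • ∑ k, Q (x k) ∂(Measure.pi fun _ : Fin p => ν) = ∫ y, Q y ∂ν := by
  have hk (k : Fin p) := measurePreserving_eval (fun _ : Fin p => ν) k
  have hint (k : Fin p) : ∫ x, Q (x k) ∂(Measure.pi fun _ : Fin p => ν) = ∫ y, Q y ∂ν := by
    have h := integral_map (hk k).measurable.aemeasurable (f := Q)
      ((hk k).map_eq.symm ▸ hQ.aestronglyMeasurable)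
    rw [(hk k).map_eq] at h
    exact h.symm
  have hQk (k : Fin p) : Integrable (fun x => Q (x k)) (Measure.pi fun _ : Fin p => ν) :=
    (hk k).integrable_comp_of_integrable hQ
  rw [integral_smul, integral_finsetSum _ fun k _ => hQk k]
  simp only [hint]
  rw [Finset.sum_const, Finset.card_univ, Fintype.card_fin, ← Nat.cast_smul_eq_nsmul ℝ, smul_smul,
    inv_mul_cancel₀ (by positivity), one_smul]

variable [CompleteSpace F]

lemma measure_le_norm_average_sub_integral_le {Q : α → F} (hQm : AEStronglyMeasurable Q ν)
    (L : F →L[ℝ] H) (hL : ∀ A, ‖A‖ ≤ ‖L A‖) (hZ : Measurable fun x => L (Q x)) {R t : ℝ}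
    (hR : 0 < R) (ht : 0 < t) (hexp : Integrable (fun x => exp (‖L (Q x)‖ / R)) ν)
    (hbound : (∫ x, exp (‖L (Q x)‖ / R) ∂ν) ^ 2 ≤ 3 / 2) {p : ℕ} (hp : 0 < p) :
    (Measure.pi fun _ : Fin p => ν) {x | t ≤ ‖(p : ℝ)⁻¹ • ∑ k, Q (x k) -
        ∫ x', (p : ℝ)⁻¹ • ∑ k, Q (x' k) ∂(Measure.pi fun _ : Fin p => ν)‖} ≤
      ENNReal.ofReal (2 * exp (-(p * t ^ 2) / (2 * R ^ 2 + 2 * R * t))) := by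
  have hQ : Integrable Q ν := by
    refine (hexp.const_mul R).mono' hQm (.of_forall fun x => (hL _).trans ?_)
    rw [← div_le_iff₀' hR]
    linarith [add_one_le_exp (‖L (Q x)‖ / R)]
  have hp' : (0 : ℝ) < p := by exact_mod_cast hp
  refine le_trans (measure_mono fun x hx => ?_)
    (measure_le_norm_sum_sub_integral_le hZ hR ht hexp hbound p)
  rw [Set.mem_ofPred_eq, integral_average_pi hQ hp] at hx
  rw [Set.mem_ofPred_eq, L.integral_comp_comm hQ]
  have hsum : (p : ℝ)⁻¹ • ∑ k, Q (x k) - ∫ y, Q y ∂ν =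
      (p : ℝ)⁻¹ • ∑ k, (Q (x k) - ∫ y, Q y ∂ν) := by
    rw [Finset.sum_sub_distrib, smul_sub, Finset.sum_const, Finset.card_univ, Fintype.card_fin,
      ← Nat.cast_smul_eq_nsmul ℝ, smul_smul, inv_mul_cancel₀ hp'.ne', one_smul]
  rw [hsum, norm_smul, norm_inv, Real.norm_of_nonneg hp'.le, ← div_eq_inv_mul,
    le_div_iff₀ hp'] at hx
  rw [mul_comm]
  refine hx.trans ((hL _).trans_eq ?_)
  simp only [map_sum, map_sub]

end Average

section Main

variable {m : ℕ}

/-- The first `m` coordinates of a vector of `ℝ^(m+1)`. -/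
def initVec (x : Fin (m + 1) → ℝ) : EuclideanSpace ℝ (Fin m) :=
  WithLp.toLp 2 fun i => x i.castSucc

lemma norm_initVec_sq_add (x : Fin (m + 1) → ℝ) :
    ‖initVec x‖ ^ 2 + x (Fin.last m) ^ 2 = ∑ i, x i ^ 2 := by
  rw [Fin.sum_univ_castSucc, EuclideanSpace.real_norm_sq_eq]
  rfl

lemma sum_qmap_mul (w : EuclideanSpace ℝ (Fin m)) (x : Fin (m + 1) → ℝ) :
    ∑ i, qmap (m + 1) w i * x i = sphereInner (initVec x) (x (Fin.last m)) w := by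
  rw [Fin.sum_univ_castSucc, sphereInner, PiLp.inner_apply]
  congr 1
  · refine Finset.sum_congr rfl fun i _ => ?_
    have : qmap (m + 1) w i.castSucc = w i := by
      rw [qmap, dif_pos (by simp)]
      rfl
    simp [this, initVec]
  · have : qmap (m + 1) w (Fin.last m) = √(1 - ‖w‖ ^ 2) := by
      rw [qmap, dif_neg (by simp)]
    rw [this, mul_comm]

lemma gfun_eq (p : ℕ) (μ : ℝ) (Y : Matrix (Fin (m + 1)) (Fin p) ℝ) :
    gfun (m + 1) p μ Y = fun v : EuclideanSpace ℝ (Fin m) =>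
      (p : ℝ)⁻¹ * ∑ k, hmu μ (sphereInner (initVec fun i => Y i k) (Y (Fin.last m) k) v) := by
  funext v
  refine congrArg (fun s : ℝ => (p : ℝ)⁻¹ * s) (Finset.sum_congr rfl fun k _ => ?_)
  exact congrArg (hmu μ) (sum_qmap_mul v fun i => Y i k)

lemma hessg_eq {p : ℕ} {μ : ℝ} (hμ : μ ≠ 0) (Y : Matrix (Fin (m + 1)) (Fin p) ℝ)
    {w : EuclideanSpace ℝ (Fin m)} (hw : ‖w‖ < 1) :
    hessg (m + 1) p μ Y w =
      (p : ℝ)⁻¹ • ∑ k, sphereHess μ w (initVec fun i => Y i k) (Y (Fin.last m) k) := by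
  have h := fderiv_gradient_average_hmu_sphereInner hμ (fun k => initVec fun i => Y i k)
    (fun k => Y (Fin.last m) k) hw
  have h' := congrArg (fun f : EuclideanSpace ℝ (Fin m) → ℝ => fderiv ℝ (gradient f) w)
    (gfun_eq p μ Y)
  exact h'.trans h

lemma continuous_sphereHess_initVec (μ : ℝ) (w : EuclideanSpace ℝ (Fin m)) :
    Continuous fun x : Fin (m + 1) → ℝ => sphereHess μ w (initVec x) (x (Fin.last m)) := by
  have : Continuous fun x : Fin (m + 1) → ℝ => (initVec x, x (Fin.last m)) := by
    unfold initVec; fun_prop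
  have h := (continuous_sphereHess μ w).comp this
  exact h

lemma measurable_frobVec_sphereHess (μ : ℝ) (w : EuclideanSpace ℝ (Fin m)) :
    Measurable fun x : Fin (m + 1) → ℝ =>
      frobVec m (sphereHess μ w (initVec x) (x (Fin.last m))) :=
  ((frobVec m).continuous.comp (continuous_sphereHess_initVec μ w)).measurable

lemma exp_norm_frobVec_sphereHess_div_le {μ : ℝ} (hμ : 0 < μ) (hμm : μ * √m ≤ 1) (hμ1 : μ ≤ 1)
    {w : EuclideanSpace ℝ (Fin m)} (hw : ‖w‖ ≤ 1 / 4) (x : Fin (m + 1) → ℝ) :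
    exp (‖frobVec m (sphereHess μ w (initVec x) (x (Fin.last m)))‖ / (16 * (m + 1 : ℕ) / μ)) ≤
      exp (1 / (16 * (m + 1 : ℕ))) * exp (1 / (8 * (m + 1 : ℕ)) * ∑ i, x i ^ 2) := by
  have h := norm_frobVec_sphereHess_le hμ hμm hμ1 hw (initVec x) (x (Fin.last m))
  rw [norm_initVec_sq_add] at h
  rw [← exp_add, exp_le_exp, div_le_iff₀ (by positivity)]
  refine h.trans (le_of_eq ?_)
  field_simp
  ring

lemma integrable_exp_norm_frobVec_sphereHess {μ : ℝ} (hμ : 0 < μ) (hμm : μ * √m ≤ 1)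
    (hμ1 : μ ≤ 1) {w : EuclideanSpace ℝ (Fin m)} (hw : ‖w‖ ≤ 1 / 4) (θ : ℝ) :
    Integrable (fun x => exp (‖frobVec m (sphereHess μ w (initVec x) (x (Fin.last m)))‖ /
      (16 * (m + 1 : ℕ) / μ))) (bgVec θ (m + 1)) := by
  have hZ := measurable_frobVec_sphereHess μ w
  have hn : (1 : ℝ) ≤ (m + 1 : ℕ) := by exact_mod_cast Nat.le_add_left 1 m
  have hs : 1 / (8 * ((m + 1 : ℕ) : ℝ)) < 1 / 2 := by
    rw [div_lt_div_iff₀ (by positivity) (by norm_num)]; linarith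
  refine ((integrable_exp_sum_sq_bgVec θ (m + 1) hs).const_mul
      (exp (1 / (16 * (m + 1 : ℕ))))).mono' ?_ (.of_forall fun x => ?_)
  · exact (measurable_exp.comp (hZ.norm.div_const _)).aestronglyMeasurable
  · rw [Real.norm_of_nonneg (exp_pos _).le]
    exact exp_norm_frobVec_sphereHess_div_le hμ hμm hμ1 hw x

lemma exp_inv_sq_le {n : ℝ} (hn : 2 ≤ n) : exp (1 / (16 * n)) ^ 2 ≤ 16 / 15 := by
  have h1 : exp (1 / (16 * n)) ^ 2 ≤ exp (1 / 16) := by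
    rw [← exp_nat_mul, exp_le_exp, Nat.cast_ofNat, mul_one_div,
      div_le_div_iff₀ (by positivity) (by norm_num)]
    linarith
  have h2 : 15 / 16 ≤ exp (-(1 / 16)) := by linarith [add_one_le_exp (-(1 / 16 : ℝ))]
  have h3 : exp (1 / 16) * exp (-(1 / 16)) = 1 := by rw [← exp_add]; simp
  nlinarith [exp_pos (1 / 16)]

lemma integral_exp_norm_frobVec_sphereHess_sq_le (hm : 0 < m) {μ : ℝ} (hμ : 0 < μ)
    (hμm : μ * √m ≤ 1) (hμ1 : μ ≤ 1) {w : EuclideanSpace ℝ (Fin m)} (hw : ‖w‖ ≤ 1 / 4) {θ : ℝ}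
    (hθ : θ ∈ Set.Ioo (0 : ℝ) 1) :
    (∫ x, exp (‖frobVec m (sphereHess μ w (initVec x) (x (Fin.last m)))‖ /
      (16 * (m + 1 : ℕ) / μ)) ∂bgVec θ (m + 1)) ^ 2 ≤ 3 / 2 := by
  have hn2 : (2 : ℝ) ≤ (m + 1 : ℕ) := by exact_mod_cast Nat.succ_le_succ hm
  have hs : 1 / (8 * ((m + 1 : ℕ) : ℝ)) < 1 / 2 := by
    rw [div_lt_div_iff₀ (by positivity) (by norm_num)]; linarith
  have hle := integral_mono (integrable_exp_norm_frobVec_sphereHess hμ hμm hμ1 hw θ)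
    ((integrable_exp_sum_sq_bgVec θ (m + 1) hs).const_mul (exp (1 / (16 * (m + 1 : ℕ)))))
    (exp_norm_frobVec_sphereHess_div_le hμ hμm hμ1 hw)
  refine (pow_le_pow_left₀ (integral_nonneg fun x => (exp_pos _).le) hle 2).trans ?_
  rw [integral_const_mul, mul_pow]
  calc _ ≤ 16 / 15 * (4 / 3 : ℝ) := mul_le_mul (exp_inv_sq_le hn2)
        (integral_exp_sum_sq_bgVec_sq_le hθ (Nat.succ_pos m)) (sq_nonneg _) (by norm_num)
    _ ≤ _ := by norm_num

lemma measure_le_norm_hessg_sub_integral_le (hm : 0 < m) {p : ℕ} (hp : 0 < p) {θ μ : ℝ}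
    (hθ : θ ∈ Set.Ioo (0 : ℝ) 1) (hμ0 : 0 < μ) (hμ : μ ≤ 1 / √(m + 1 : ℕ))
    {w : EuclideanSpace ℝ (Fin m)} (hw : ‖w‖ ≤ 1 / 4) {t : ℝ} (ht : 0 < t) :
    bgMatrix θ (m + 1) p {X | t ≤ ‖hessg (m + 1) p μ (Matrix.of X) w -
        ∫ X', hessg (m + 1) p μ (Matrix.of X') w ∂bgMatrix θ (m + 1) p‖} ≤
      ENNReal.ofReal (2 * exp (-(p * t ^ 2) /
        (2 * (16 * (m + 1 : ℕ) / μ) ^ 2 + 2 * (16 * (m + 1 : ℕ) / μ) * t))) := by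
  have hn : 0 < √((m + 1 : ℕ) : ℝ) := sqrt_pos.2 (by positivity)
  have hμn : μ * √((m + 1 : ℕ) : ℝ) ≤ 1 := (le_div_iff₀ hn).1 hμ
  have hμm : μ * √m ≤ 1 := by
    refine le_trans (mul_le_mul_of_nonneg_left (sqrt_le_sqrt ?_) hμ0.le) hμn
    exact_mod_cast Nat.le_succ m
  have hμ1 : μ ≤ 1 := by
    refine le_trans (le_mul_of_one_le_right hμ0.le (one_le_sqrt.2 ?_)) hμn
    exact_mod_cast Nat.le_add_left 1 m
  have := isProbabilityMeasure_bg hθ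
  have : IsProbabilityMeasure (bgVec θ (m + 1)) := by unfold bgVec; infer_instance
  have hcont := continuous_sphereHess_initVec μ w
  have key := measure_le_norm_average_sub_integral_le (ν := bgVec θ (m + 1))
    hcont.aestronglyMeasurable (frobVec m) norm_le_norm_frobVec
    (measurable_frobVec_sphereHess μ w) (R := 16 * (m + 1 : ℕ) / μ) (by positivity) ht
    (integrable_exp_norm_frobVec_sphereHess hμ0 hμm hμ1 hw θ)
    (integral_exp_norm_frobVec_sphereHess_sq_le hm hμ0 hμm hμ1 hw hθ) hp
  have hswap := measurePreserving_swap_bgMatrix hθ (m + 1) p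
  have hess (X : Fin (m + 1) → Fin p → ℝ) : hessg (m + 1) p μ (Matrix.of X) w =
      (p : ℝ)⁻¹ • ∑ k, sphereHess μ w (initVec fun i => X i k) (X (Fin.last m) k) :=
    hessg_eq hμ0.ne' (Matrix.of X) (by linarith)
  have hcont' : Continuous fun x : Fin p → Fin (m + 1) → ℝ =>
      (p : ℝ)⁻¹ • ∑ k, sphereHess μ w (initVec (x k)) (x k (Fin.last m)) := by
    refine Continuous.fun_const_smul (continuous_finsetSum _ fun k _ => ?_) _
    have h := hcont.comp (continuous_apply (A := fun _ : Fin p => Fin (m + 1) → ℝ) k)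
    exact h
  have hint := integral_map (μ := bgMatrix θ (m + 1) p) hswap.measurable.aemeasurable
    hcont'.aestronglyMeasurable
  rw [hswap.map_eq] at hint
  rw [hint, ← hswap.map_eq] at key
  refine le_trans (le_of_eq ?_)
    ((Measure.le_map_apply hswap.measurable.aemeasurable _).trans key)
  simp only [hess]
  rfl

end Main

lemma pos_of_mem_gammaSet {n : ℕ} {w : EuclideanSpace ℝ (Fin (n - 1))} (hw : w ∈ GammaSet n) :
    0 < n := by
  refine Nat.pos_of_ne_zero fun hn => ?_
  subst hn
  simp only [GammaSet, Set.mem_ofPred_eq, CharP.cast_eq_zero, mul_zero, div_zero, sqrt_zero] at hw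
  exact absurd hw (norm_nonneg w).not_gt

/-- Proposition: pointwise concentration of the Hessian in operator norm. -/
theorem statement9 (n p : ℕ) (θ μ : ℝ) (hθ : θ ∈ Set.Ioo (0 : ℝ) 1) (hμ0 : 0 < μ)
    (hμ : μ ≤ 1 / Real.sqrt n)
    (w : EuclideanSpace ℝ (Fin (n - 1))) (hw : w ∈ GammaSet n) (hw4 : ‖w‖ ≤ 1 / 4)
    (t : ℝ) (ht : 0 < t) :
    bgMatrix θ n p
        {X | t ≤ ‖hessg n p μ (Matrix.of X) w -
                  ∫ X', hessg n p μ (Matrix.of X') w ∂bgMatrix θ n p‖} ≤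
      ENNReal.ofReal
        (4 * (n : ℝ) * Real.exp (-((p : ℝ) * μ ^ 2 * t ^ 2) /
          (512 * (n : ℝ) ^ 2 + 32 * μ * n * t))) := by
  rcases Nat.eq_zero_or_pos p with rfl | hp
  · have hn : 0 < n := pos_of_mem_gammaSet hw
    have := isProbabilityMeasure_bg hθ
    have : IsProbabilityMeasure (bgMatrix θ n 0) := by unfold bgMatrix; infer_instance
    refine prob_le_one.trans ?_
    have hn1 : (1 : ℝ) ≤ n := by exact_mod_cast hn
    rw [ENNReal.one_le_ofReal]
    simp only [CharP.cast_eq_zero, zero_mul, neg_zero, zero_div, exp_zero]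
    linarith
  match n, w, hw, hw4 with
  | 0, w, hw, _ => exact absurd (pos_of_mem_gammaSet hw) (lt_irrefl 0)
  | 1, w, _, _ =>
    have hs : Subsingleton (EuclideanSpace ℝ (Fin (1 - 1)) →L[ℝ] EuclideanSpace ℝ (Fin (1 - 1))) :=
      ⟨fun A B => by ext x i; exact i.elim0⟩
    refine (measure_mono_null (t := ∅) (fun X hX => ?_) measure_empty).le.trans zero_le
    exfalso
    rw [Set.mem_ofPred_eq, hs.elim (_ - _) 0, norm_zero] at hX
    linarith
  | m + 2, w, _, hw4 =>
    refine (measure_le_norm_hessg_sub_integral_le m.succ_pos hp hθ hμ0 hμ hw4 ht).trans ?_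
    have hn1 : (1 : ℝ) ≤ (m + 2 : ℕ) := by exact_mod_cast Nat.le_add_left 1 (m + 1)
    refine ENNReal.ofReal_le_ofReal (mul_le_mul (by linarith) (exp_le_exp.2 (le_of_eq ?_))
      (exp_pos _).le (by positivity))
    field_simp
    ring

end
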